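/- arXiv:0904.1237 — 5 statements merged into one kernel-verified Lean document; each statement's English description precedes it below -/
import Mathlib

section
/- Let h be a positive harmonic function on the open unit disc D ⊂ ℂ, and let λ ∈ D. Suppose the directional derivative of h at the origin in the direction of λ vanishes, i.e. the real Fréchet derivative of h at 0 applied to the vector λ is zero. Then h satisfies the following strengthened Harnack inequality: ((1−|λ|²)/(1+|λ|²))·h(λ) ≤ h(0) ≤ ((1+|λ|²)/(1−|λ|²))·h(λ). -/
/-- A function `h : ℂ → ℝ` is harmonic on an open set `U` if it is twice continuously
differentiable there (viewing `ℂ` as `ℝ²`) and its Laplacian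
`∂²h/∂x² + ∂²h/∂y²` vanishes on `U`. -/
def HarmonicOnSet (h : ℂ → ℝ) (U : Set ℂ) : Prop :=
  ContDiffOn ℝ 2 h U ∧
    ∀ z ∈ U,
      fderiv ℝ (fun w => fderiv ℝ h w 1) z 1 +
        fderiv ℝ (fun w => fderiv ℝ h w Complex.I) z Complex.I = 0

open Complex InnerProductSpace Metric Real Topology in
lemma harm_conv (h : ℂ → ℝ) (hharm : HarmonicOnSet h (ball (0 : ℂ) 1)) :
    HarmonicOnNhd h (ball (0 : ℂ) 1) := by
  intro x hx
  refine ⟨hharm.1.contDiffAt (isOpen_ball.mem_nhds hx), ?_⟩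
  filter_upwards [isOpen_ball.mem_nhds hx] with z hz
  have h2 : ContDiffAt ℝ 2 h z := hharm.1.contDiffAt (isOpen_ball.mem_nhds hz)
  have hd : DifferentiableAt ℝ (fderiv ℝ h) z :=
    (h2.fderiv_right (m := 1) (by norm_num)).differentiableAt (by norm_num)
  have key : ∀ v : ℂ, fderiv ℝ (fun w => fderiv ℝ h w v) z v = fderiv ℝ (fderiv ℝ h) z v v := by
    intro v
    rw [fderiv_clm_apply hd (by fun_prop)]
    simp
  have := hharm.2 z hz
  rw [key, key] at this
  rw [laplacian_eq_iteratedFDeriv_complexPlane]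
  simpa [iteratedFDeriv_two_apply] using this

open Complex InnerProductSpace Metric Real Topology ComplexConjugate in
lemma avg_zero (h : ℂ → ℝ) (hh : HarmonicOnNhd h (ball (0 : ℂ) 1)) (lam : ℂ)
    (hder : fderiv ℝ h 0 lam = 0) (R : ℝ) (hR0 : 0 < R) (hR1 : R < 1) :
    Real.circleAverage (fun z => (conj lam * z).re * h z) 0 R = 0 := by
  obtain ⟨F, hF, hFh⟩ := hh.exists_analyticOnNhd_ball_re_eq
  have hsub : closedBall (0 : ℂ) R ⊆ ball 0 1 := closedBall_subset_ball hR1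
  have hFd : DifferentiableOn ℂ F (ball 0 1) := hF.differentiableOn
  have hFc : ContinuousOn F (sphere 0 |R|) :=
    hFd.continuousOn.mono ((by rw [abs_of_pos hR0]; exact sphere_subset_closedBall.trans hsub))
  have hne : ∀ z ∈ sphere (0 : ℂ) |R|, z ≠ 0 := by
    intro z hz h0
    rw [h0, abs_of_pos hR0] at hz
    simp at hz
    linarith
  have e1 : Real.circleAverage (fun z => conj lam * z * F z) 0 R = 0 := by
    have : DiffContOnCl ℂ (fun z => conj lam * z * F z) (ball 0 |R|) := by
      apply DifferentiableOn.diffContOnCl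
      rw [abs_of_pos hR0, closure_ball _ hR0.ne']
      exact (by fun_prop : DifferentiableOn ℂ (fun z => conj lam * z) _).mul (hFd.mono hsub)
    rw [this.circleAverage]
    simp
  have e2 : Real.circleAverage (fun z => z⁻¹ * F z) 0 R = deriv F 0 := by
    rw [Real.circleAverage_eq_circleIntegral hR0.ne',
      ← two_pi_I_inv_smul_circleIntegral_sub_sq_inv_smul_of_differentiable isOpen_ball hsub hFd
        (mem_ball_self hR0)]
    congr 2
    ext z
    simp [pow_two, mul_assoc]
  have c1 : CircleIntegrable (fun z => conj lam * z * F z) 0 R :=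
    ((by fun_prop : ContinuousOn (fun z => conj lam * z) _).mul hFc).circleIntegrable'
  have c2 : CircleIntegrable (fun z => z⁻¹ * F z) 0 R :=
    ((continuousOn_inv₀.mono (fun z hz => hne z hz)).mul hFc).circleIntegrable'
  have c3 : CircleIntegrable (fun z => (lam * R ^ 2) • (z⁻¹ * F z)) 0 R := c2.const_smul
  have e3 : Real.circleAverage (fun z => conj lam * z * F z + (lam * R ^ 2) • (z⁻¹ * F z)) 0 R
      = lam * R ^ 2 * deriv F 0 := by
    rw [Real.circleAverage_fun_add c1 c3, e1, Real.circleAverage_fun_smul, e2]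
    simp
  have e4 : Real.circleAverage (fun z => (2 : ℝ) • ((conj lam * z).re * h z)) 0 R
      = (lam * R ^ 2 * deriv F 0).re := by
    have c4 : CircleIntegrable
        (fun z => conj lam * z * F z + (lam * R ^ 2) • (z⁻¹ * F z)) 0 R := c1.add c3
    rw [← e3, ← Complex.reCLM_apply, ← ContinuousLinearMap.circleAverage_comp_comm _ c4]
    apply Real.circleAverage_congr_sphere
    intro z hz
    have hz0 := hne z hz
    have hzb : z ∈ ball (0 : ℂ) 1 := by
      rw [abs_of_pos hR0] at hz
      exact hsub (sphere_subset_closedBall hz)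
    have hzR : z * conj z = (R : ℂ) ^ 2 := by
      rw [Complex.mul_conj, Complex.normSq_eq_norm_sq]
      rw [abs_of_pos hR0, mem_sphere_zero_iff_norm] at hz
      rw [hz]; push_cast; rfl
    have hi : (lam * (R : ℂ) ^ 2) • (z⁻¹ * F z) = lam * conj z * F z := by
      rw [← hzR, smul_eq_mul]; field_simp
    have := hFh hzb
    simp only at this
    simp only [Function.comp_apply, hi, Complex.reCLM_apply, ← this]
    simp
    ring
  have e5 : fderiv ℝ h 0 lam = (lam * deriv F 0).re := by
    have h0 : (0 : ℂ) ∈ ball (0 : ℂ) 1 := mem_ball_self one_pos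
    have hev : h =ᶠ[𝓝 0] (fun z => (F z).re) := by
      filter_upwards [isOpen_ball.mem_nhds h0] with z hz using (hFh hz).symm
    have hFD : HasFDerivAt F _ (0 : ℂ) := (hF 0 h0).differentiableAt.hasDerivAt.hasFDerivAt.restrictScalars ℝ
    have := (Complex.reCLM.hasFDerivAt.comp (0 : ℂ) hFD).congr_of_eventuallyEq hev
    rw [this.fderiv]
    simp
  rw [Real.circleAverage_fun_smul] at e4
  have e6 : (lam * R ^ 2 * deriv F 0).re = 0 := by
    have : lam * R ^ 2 * deriv F 0 = ((R ^ 2 : ℝ) : ℂ) * (lam * deriv F 0) := by push_cast; ring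
    rw [this, Complex.re_ofReal_mul, ← e5, hder, mul_zero]
  rw [e6] at e4
  simpa using e4

open Complex InnerProductSpace Metric Real Topology ComplexConjugate in
lemma harnack_R (h : ℂ → ℝ) (hh : HarmonicOnNhd h (ball (0 : ℂ) 1))
    (hpos : ∀ z ∈ ball (0 : ℂ) 1, 0 < h z) (lam : ℂ)
    (hder : fderiv ℝ h 0 lam = 0) (R : ℝ) (hR : ‖lam‖ < R) (hR1 : R < 1) :
    (R ^ 2 - ‖lam‖ ^ 2) * h lam ≤ (R ^ 2 + ‖lam‖ ^ 2) * h 0 ∧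
    (R ^ 2 - ‖lam‖ ^ 2) * h 0 ≤ (R ^ 2 + ‖lam‖ ^ 2) * h lam := by
  have hr := norm_nonneg lam
  have hR0 : 0 < R := hr.trans_lt hR
  have hsub : closedBall (0 : ℂ) R ⊆ ball 0 1 := closedBall_subset_ball hR1
  have hcl := hh.mono hsub
  have hc : ContinuousOn h (sphere 0 |R|) :=
    hcl.continuousOn.mono (by rw [abs_of_pos hR0]; exact sphere_subset_closedBall)
  have hw : lam ∈ ball (0 : ℂ) R := by simpa using hR
  have a0 : Real.circleAverage h 0 R = h 0 := by
    have := hcl.circleAverage_poissonKernel_smul (mem_ball_self hR0)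
    rw [← this]
    apply Real.circleAverage_congr_sphere
    intro z hz
    rw [abs_of_pos hR0, mem_sphere_zero_iff_norm] at hz
    simp [poissonKernel_def, hz, hR0.ne']
  have a1 := hcl.circleAverage_poissonKernel_smul hw
  have a2 := avg_zero h hh lam hder R hR0 hR1
  have i0 : CircleIntegrable h 0 R := hc.circleIntegrable'
  have i2 : CircleIntegrable (fun z => (conj lam * z).re * h z) 0 R :=
    ((by fun_prop : ContinuousOn (fun z => (conj lam * z).re) _).mul hc).circleIntegrable'
  have i1 : CircleIntegrable (poissonKernel 0 lam • h) 0 R := by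
    apply ContinuousOn.circleIntegrable'
    rw [poissonKernel_eq_re_herglotzRieszKernel]
    exact (Complex.continuous_re.comp_continuousOn
      (continuousOn_herglotzRieszKernel_sphere hw)).smul hc
  have lin : ∀ a b : ℝ, Real.circleAverage (fun z => a • h z + b • ((conj lam * z).re * h z)) 0 R
      = a * h 0 := by
    intro a b
    have j0 : CircleIntegrable (fun z => a • h z) 0 R := i0.const_smul
    have j2 : CircleIntegrable (fun z => b • ((conj lam * z).re * h z)) 0 R := i2.const_smul
    rw [Real.circleAverage_fun_add j0 j2, Real.circleAverage_fun_smul,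
      Real.circleAverage_fun_smul, a2, a0]
    simp
  have ilin : ∀ a b : ℝ, CircleIntegrable (fun z => a • h z + b • ((conj lam * z).re * h z)) 0 R :=
    fun a b => i0.const_smul.add i2.const_smul
  have hD : 0 < R ^ 2 - ‖lam‖ ^ 2 := by nlinarith
  have hA : 0 < R ^ 2 + ‖lam‖ ^ 2 := by nlinarith
  have hker : ∀ z ∈ sphere (0 : ℂ) |R|, 0 < h z ∧ |(conj lam * z).re| ≤ ‖lam‖ * R ∧
      poissonKernel 0 lam z
        = (R ^ 2 - ‖lam‖ ^ 2) / (R ^ 2 + ‖lam‖ ^ 2 - 2 * (conj lam * z).re) := by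
    intro z hz
    rw [abs_of_pos hR0] at hz
    refine ⟨hpos z (hsub (sphere_subset_closedBall hz)), ?_, ?_⟩
    · rw [mem_sphere_zero_iff_norm] at hz
      refine (Complex.abs_re_le_norm _).trans ?_
      simp [hz]
    · rw [mem_sphere_zero_iff_norm] at hz
      rw [poissonKernel_def]
      simp only [sub_zero, hz]
      congr 1
      rw [← Complex.normSq_eq_norm_sq, Complex.normSq_sub, Complex.normSq_eq_norm_sq,
        Complex.normSq_eq_norm_sq, hz, mul_comm z]
  constructor
  · have := Real.circleAverage_mono i1 (ilin ((R ^ 2 + ‖lam‖ ^ 2) / (R ^ 2 - ‖lam‖ ^ 2))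
      (2 / (R ^ 2 - ‖lam‖ ^ 2))) (by
        intro z hz
        obtain ⟨hz1, hz2, hz3⟩ := hker z hz
        rw [abs_le] at hz2
        set s := (conj lam * z).re
        simp only [Pi.smul_apply', smul_eq_mul, hz3]
        rw [← mul_assoc, ← add_mul]
        gcongr
        have hp : 0 < R ^ 2 + ‖lam‖ ^ 2 - 2 * s := by nlinarith
        rw [div_mul_eq_mul_div, ← add_div, div_le_div_iff₀ hp hD]
        nlinarith)
    rw [a1, lin, div_mul_eq_mul_div, le_div_iff₀ hD] at this
    linarith
  · have := Real.circleAverage_mono (ilin ((R ^ 2 - ‖lam‖ ^ 2) / (R ^ 2 + ‖lam‖ ^ 2))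
      (2 * (R ^ 2 - ‖lam‖ ^ 2) / (R ^ 2 + ‖lam‖ ^ 2) ^ 2)) i1 (by
        intro z hz
        obtain ⟨hz1, hz2, hz3⟩ := hker z hz
        rw [abs_le] at hz2
        set s := (conj lam * z).re
        simp only [Pi.smul_apply', smul_eq_mul, hz3]
        rw [← mul_assoc, ← add_mul]
        gcongr
        have hp : 0 < R ^ 2 + ‖lam‖ ^ 2 - 2 * s := by nlinarith
        generalize R ^ 2 + ‖lam‖ ^ 2 = A at *
        generalize R ^ 2 - ‖lam‖ ^ 2 = D at *
        have : D / (A - 2 * s) - (D / A + 2 * D / A ^ 2 * s)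
          = 4 * D * s ^ 2 / (A ^ 2 * (A - 2 * s)) := by
          have := hp.ne'
          field_simp
          ring
        have : 0 ≤ 4 * D * s ^ 2 / (A ^ 2 * (A - 2 * s)) := by positivity
        linarith)
    rw [a1, lin, div_mul_eq_mul_div, div_le_iff₀ hA] at this
    linarith

/-- **Symmetric Harnack inequality.** If `h` is a positive harmonic function on the unit
disc whose directional derivative at the origin in the direction `λ` vanishes, then
`((1−|λ|²)/(1+|λ|²)) h(λ) ≤ h(0) ≤ ((1+|λ|²)/(1−|λ|²)) h(λ)`. -/
theorem symmetric_harnack (h : ℂ → ℝ)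
    (hharm : HarmonicOnSet h (Metric.ball (0 : ℂ) 1))
    (hpos : ∀ z ∈ Metric.ball (0 : ℂ) 1, 0 < h z)
    (lam : ℂ) (hlam : lam ∈ Metric.ball (0 : ℂ) 1)
    (hder : fderiv ℝ h 0 lam = 0) :
    (1 - ‖lam‖ ^ 2) / (1 + ‖lam‖ ^ 2) * h lam ≤ h 0 ∧
      h 0 ≤ (1 + ‖lam‖ ^ 2) / (1 - ‖lam‖ ^ 2) * h lam := by
  have hh := harm_conv h hharm
  have hl : ‖lam‖ < 1 := by simpa using hlam
  have hr := norm_nonneg lam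
  have key := harnack_R h hh hpos lam hder
  have hmem : ∀ᶠ R : ℝ in nhdsWithin 1 (Set.Iio 1), ‖lam‖ < R ∧ R < 1 :=
    Ioo_mem_nhdsLT hl
  have t : ∀ c : ℝ, ∀ y : ℝ, Filter.Tendsto (fun R : ℝ => (R ^ 2 + c) * y)
      (nhdsWithin 1 (Set.Iio 1)) (nhds ((1 + c) * y)) := by
    intro c y
    have : Continuous (fun R : ℝ => (R ^ 2 + c) * y) := by fun_prop
    simpa using (this.tendsto 1).mono_left nhdsWithin_le_nhds
  have k1 := le_of_tendsto_of_tendsto (t (-‖lam‖ ^ 2) (h lam)) (t (‖lam‖ ^ 2) (h 0))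
    (hmem.mono fun R hR => by have := (key R hR.1 hR.2).1; linarith)
  have k2 := le_of_tendsto_of_tendsto (t (-‖lam‖ ^ 2) (h 0)) (t (‖lam‖ ^ 2) (h lam))
    (hmem.mono fun R hR => by have := (key R hR.1 hR.2).2; linarith)
  have hA : 0 < 1 + ‖lam‖ ^ 2 := by positivity
  have hD : 0 < 1 - ‖lam‖ ^ 2 := by nlinarith
  constructor
  · rw [div_mul_eq_mul_div, div_le_iff₀ hA]
    linarith
  · rw [div_mul_eq_mul_div, le_div_iff₀ hD]
    linarith
end

section
/- Let h be a positive harmonic function on the open unit disc D ⊂ ℂ with h(0) = 1 and with vanishing gradient at the origin (the real Fréchet derivative of h at 0 is the zero map). Then for every λ ∈ D one has (1−|λ|²)/(1+|λ|²) ≤ h(λ) ≤ (1+|λ|²)/(1−|λ|²). -/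
/-- **Symmetric Harnack inequality, normalized form.** If `h` is a positive harmonic
function on the unit disc with `h(0) = 1` and vanishing gradient at the origin, then
`(1−|λ|²)/(1+|λ|²) ≤ h(λ) ≤ (1+|λ|²)/(1−|λ|²)` for every `λ` in the disc. -/
theorem symmetric_harnack_normalized (h : ℂ → ℝ)
    (hharm : HarmonicOnSet h (Metric.ball (0 : ℂ) 1))
    (hpos : ∀ z ∈ Metric.ball (0 : ℂ) 1, 0 < h z)
    (h0 : h 0 = 1)
    (hgrad : fderiv ℝ h 0 = 0) :
    ∀ lam ∈ Metric.ball (0 : ℂ) 1,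
      (1 - ‖lam‖ ^ 2) / (1 + ‖lam‖ ^ 2) ≤ h lam ∧
        h lam ≤ (1 + ‖lam‖ ^ 2) / (1 - ‖lam‖ ^ 2) := by
  intro lam hlam
  have hB : IsOpen (Metric.ball (0 : ℂ) 1) := Metric.isOpen_ball
  have h0B : (0 : ℂ) ∈ Metric.ball (0 : ℂ) 1 := by simp
  have hH : InnerProductSpace.HarmonicOnNhd h (Metric.ball (0 : ℂ) 1) := by
    intro x hx
    refine ⟨hharm.1.contDiffAt (hB.mem_nhds hx), ?_⟩
    filter_upwards [hB.mem_nhds hx] with y hy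
    have hc : ContDiffAt ℝ 2 h y := hharm.1.contDiffAt (hB.mem_nhds hy)
    have h2 := hharm.2 y hy
    rw [fderiv_clm_apply (by fun_prop) (by fun_prop),
      fderiv_clm_apply (by fun_prop) (by fun_prop)] at h2
    simp [InnerProductSpace.laplacian_eq_iteratedFDeriv_complexPlane,
      iteratedFDeriv_two_apply] at h2 ⊢
    exact h2
  obtain ⟨F₀, hF₀, hre₀⟩ := hH.exists_analyticOnNhd_ball_re_eq
  obtain ⟨F, hF, hre, hF0⟩ : ∃ F : ℂ → ℂ, DifferentiableOn ℂ F (Metric.ball 0 1) ∧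
      (∀ z ∈ Metric.ball (0 : ℂ) 1, (F z).re = h z) ∧ F 0 = 1 := by
    refine ⟨fun z => F₀ z - Complex.I * ((F₀ 0).im : ℂ),
      hF₀.differentiableOn.sub_const _, ?_, ?_⟩
    · intro z hz
      simpa using hre₀ hz
    · have := hre₀ h0B
      apply Complex.ext <;> simp_all
  have hFd : DifferentiableAt ℂ F 0 := hF.differentiableAt (hB.mem_nhds h0B)
  have hF' : deriv F 0 = 0 := by
    have h1 : HasFDerivAt (fun z => (F z).re)
        (Complex.reCLM.comp ((fderiv ℂ F 0).restrictScalars ℝ)) 0 :=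
      Complex.reCLM.hasFDerivAt.comp 0 (hFd.hasFDerivAt.restrictScalars ℝ)
    have h2 : (fun z => (F z).re) =ᶠ[nhds 0] h := by
      filter_upwards [hB.mem_nhds h0B] with z hz using hre z hz
    have h3 := h1.fderiv
    rw [h2.fderiv_eq, hgrad] at h3
    have e1 := DFunLike.congr_fun h3 1
    have e2 := DFunLike.congr_fun h3 Complex.I
    simp at e1 e2
    apply Complex.ext <;> simp [*]
  have hFp : ∀ z ∈ Metric.ball (0 : ℂ) 1, 0 < (F z).re := fun z hz => by
    rw [hre z hz]; exact hpos z hz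
  have hne : ∀ z ∈ Metric.ball (0 : ℂ) 1, F z + 1 ≠ 0 := fun z hz hh => by
    have := congrArg Complex.re hh
    have := hFp z hz
    simp at *
    linarith
  let G : ℂ → ℂ := fun z => (F z - 1) / (F z + 1)
  have hG : DifferentiableOn ℂ G (Metric.ball 0 1) :=
    (hF.sub_const 1).div (hF.add_const 1) hne
  have hG0 : G 0 = 0 := by simp [G, hF0]
  have hmaps : Set.MapsTo G (Metric.ball 0 1) (Metric.closedBall (G 0) 1) := by
    intro z hz
    have hz' := hFp z hz
    rw [hG0, mem_closedBall_zero_iff, norm_div, div_le_one (norm_pos_iff.2 (hne z hz)),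
      ← sq_le_sq₀ (norm_nonneg _) (norm_nonneg _), Complex.sq_norm, Complex.sq_norm]
    simp [Complex.normSq_apply]
    nlinarith
  have hGd : HasDerivAt G 0 0 := by
    have hd := hFd.hasDerivAt
    rw [hF'] at hd
    have := (hd.sub_const 1).div (hd.add_const 1) (hne 0 h0B)
    have h2 : HasDerivAt G _ 0 := this
    refine h2.congr_deriv ?_
    simp
  have hlo : (fun w => G w - G 0) =o[nhds 0] (fun w : ℂ => ‖w - 0‖ ^ 1) := by
    have := hGd.isLittleO
    simpa using this.norm_right
  have key := Complex.dist_le_mul_div_pow_of_mapsTo_ball_of_isLittleO hG hmaps hlo hlam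
  rw [hG0, dist_zero_right, dist_zero_right] at key
  have hl : ‖lam‖ < 1 := by simpa using hlam
  have hs0 : 0 ≤ ‖lam‖ ^ 2 := by positivity
  have hs1 : ‖lam‖ ^ 2 < 1 := by nlinarith [norm_nonneg lam]
  have key2 : ‖F lam - 1‖ ≤ ‖lam‖ ^ 2 * ‖F lam + 1‖ := by
    rw [norm_div, div_le_iff₀ (norm_pos_iff.2 (hne lam hlam))] at key
    simpa using key
  generalize ‖lam‖ ^ 2 = s at *
  have key3 : ‖F lam - 1‖ ^ 2 ≤ (s * ‖F lam + 1‖) ^ 2 := by gcongr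
  rw [mul_pow, Complex.sq_norm, Complex.sq_norm] at key3
  simp [Complex.normSq_apply] at key3
  have hx := hFp lam hlam
  rw [← hre lam hlam]
  generalize (F lam).re = x at *
  generalize (F lam).im = y at *
  have k4 : (x - 1) ^ 2 ≤ (s * (x + 1)) ^ 2 := by
    nlinarith [mul_nonneg (sq_nonneg y) (show 0 ≤ 1 - s ^ 2 by nlinarith)]
  have k5 := abs_le_of_sq_le_sq' k4 (by positivity)
  rw [div_le_iff₀ (by linarith), le_div_iff₀ (by linarith)]
  constructor <;> linarith [k5.1, k5.2]
end

section
/- Let g be a holomorphic function on the open unit disc D ⊂ ℂ with Re g(z) > 0 for all z ∈ D, g(0) = 1, and g'(0) = 0. Then for every λ ∈ D one has (1−|λ|²)/(1+|λ|²) ≤ Re g(λ) ≤ (1+|λ|²)/(1−|λ|²). -/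
/-- **Holomorphic formulation of the symmetric Harnack inequality.** If `g` is holomorphic
on the unit disc with positive real part, `g(0) = 1` and `g'(0) = 0`, then
`(1−|λ|²)/(1+|λ|²) ≤ Re g(λ) ≤ (1+|λ|²)/(1−|λ|²)` for every `λ` in the disc. -/
theorem symmetric_harnack_holomorphic (g : ℂ → ℂ)
    (hg : ∀ z ∈ Metric.ball (0 : ℂ) 1, DifferentiableAt ℂ g z)
    (hre : ∀ z ∈ Metric.ball (0 : ℂ) 1, 0 < (g z).re)
    (hg0 : g 0 = 1)
    (hg'0 : deriv g 0 = 0) :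
    ∀ lam ∈ Metric.ball (0 : ℂ) 1,
      (1 - ‖lam‖ ^ 2) / (1 + ‖lam‖ ^ 2) ≤ (g lam).re ∧
        (g lam).re ≤ (1 + ‖lam‖ ^ 2) / (1 - ‖lam‖ ^ 2) := by
  intro lam hlam
  have hne : ∀ z ∈ Metric.ball (0 : ℂ) 1, g z + 1 ≠ 0 := by
    intro z hz h
    have h1 := hre z hz
    have h2 := congrArg Complex.re h
    simp at h2
    linarith
  have h0 : (0 : ℂ) ∈ Metric.ball (0 : ℂ) 1 := by simp
  set f : ℂ → ℂ := fun z => (g z - 1) / (g z + 1) with hf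
  have hf0 : f 0 = 0 := by simp [hf, hg0]
  have hd : DifferentiableOn ℂ f (Metric.ball 0 1) := fun z hz =>
    (((hg z hz).sub_const 1).div ((hg z hz).add_const 1) (hne z hz)).differentiableWithinAt
  have hmaps : Set.MapsTo f (Metric.ball 0 1) (Metric.closedBall (f 0) 1) := by
    intro z hz
    rw [hf0, mem_closedBall_zero_iff]
    simp only [hf]
    rw [norm_div, div_le_one (norm_pos_iff.2 (hne z hz))]
    have hz' := hre z hz
    refine (sq_le_sq₀ (norm_nonneg _) (norm_nonneg _)).1 ?_
    rw [Complex.sq_norm, Complex.sq_norm, Complex.normSq_apply, Complex.normSq_apply]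
    simp only [Complex.sub_re, Complex.sub_im, Complex.add_re, Complex.add_im, Complex.one_re,
      Complex.one_im, sub_zero, add_zero]
    nlinarith
  have hder : HasDerivAt f 0 0 := by
    have h1 : HasDerivAt g 0 0 := by
      have := (hg 0 h0).hasDerivAt
      rwa [hg'0] at this
    have h2 := (h1.sub_const 1).div (h1.add_const 1) (hne 0 h0)
    refine HasDerivAt.congr_deriv (f := f) h2 ?_
    simp
  have hn : (f · - f 0) =o[nhds 0] (fun w : ℂ => ‖w - 0‖ ^ 1) := by
    have h := hasDerivAt_iff_isLittleO.1 hder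
    simpa using h.norm_right
  have key := Complex.dist_le_mul_div_pow_of_mapsTo_ball_of_isLittleO hd hmaps hn hlam
  rw [hf0] at key
  simp only [hf, dist_zero_right, norm_div, div_one, one_mul, Nat.reduceAdd] at key
  rw [div_le_iff₀ (norm_pos_iff.2 (hne lam hlam))] at key
  have hx := hre lam hlam
  have hr : ‖lam‖ < 1 := by simpa using hlam
  have hs1 : ‖lam‖ ^ 2 < 1 := by
    have := norm_nonneg lam
    nlinarith
  have hs0 : 0 ≤ ‖lam‖ ^ 2 := by positivity
  generalize ‖lam‖ ^ 2 = s at *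
  have key2 := pow_le_pow_left₀ (norm_nonneg _) key 2
  rw [mul_pow, Complex.sq_norm, Complex.sq_norm, Complex.normSq_apply, Complex.normSq_apply] at key2
  simp only [Complex.sub_re, Complex.sub_im, Complex.add_re, Complex.add_im, Complex.one_re,
    Complex.one_im, sub_zero, add_zero] at key2
  have hss : s ^ 2 ≤ 1 := by nlinarith
  have key3 : ((g lam).re - 1) ^ 2 ≤ (s * ((g lam).re + 1)) ^ 2 := by
    nlinarith [mul_nonneg (sub_nonneg.2 hss) (mul_self_nonneg (g lam).im)]
  have key4 := abs_le.1 (abs_le_of_sq_le_sq key3 (by positivity))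
  constructor
  · rw [div_le_iff₀ (by linarith)]
    linarith [key4.1]
  · rw [le_div_iff₀ (by linarith)]
    linarith [key4.2]
end

section
/- Let 0 < ρ < 1, 0 ≤ k < ρ, C ≥ 1 and n ≥ 1. Let r₁,…,rₙ be holomorphic nonvanishing functions on the disc ρD = {λ ∈ ℂ : |λ| < ρ} satisfying: (a) rⱼ(x) = conj(rⱼ(−x)) for every real x with |x| < ρ and every j; (b) Σⱼ |rⱼ(λ)|² ≤ C³ for every λ ∈ ρD; (c) Σⱼ |rⱼ(0)| ≤ 1. Then, with p := 1 + k²/ρ², one has Σⱼ |rⱼ(k)|ᵖ ≤ C^{3k²/ρ²}. -/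
open Finset

/-- Holomorphic logarithm on a disc. -/
lemma exists_holo_log {ρ : ℝ} (hρ : 0 < ρ) (f : ℂ → ℂ)
    (hd : DifferentiableOn ℂ f (Metric.ball 0 ρ)) (hne : ∀ z ∈ Metric.ball (0 : ℂ) ρ, f z ≠ 0) :
    ∃ L : ℂ → ℂ, DifferentiableOn ℂ L (Metric.ball 0 ρ) ∧
      ∀ z ∈ Metric.ball (0 : ℂ) ρ, (L z).re = Real.log ‖f z‖ := by
  have h1 : DifferentiableOn ℂ (fun z => deriv f z / f z) (Metric.ball 0 ρ) :=
    (hd.deriv Metric.isOpen_ball).div hd hne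
  obtain ⟨g, hg⟩ := h1.isExactOn_ball
  have hm0 : (0 : ℂ) ∈ Metric.ball (0 : ℂ) ρ := Metric.mem_ball_self hρ
  have hder : ∀ z ∈ Metric.ball (0 : ℂ) ρ,
      HasDerivAt (fun w => Complex.exp (-g w) * f w) 0 z := by
    intro z hz
    have hf : HasDerivAt f (deriv f z) z :=
      (hd.differentiableAt (Metric.isOpen_ball.mem_nhds hz)).hasDerivAt
    have := (hg z hz).neg.cexp.mul hf
    convert! this using 1
    have := hne z hz
    simp only [Pi.neg_apply]
    field_simp
    ring
  have hconst : ∀ z ∈ Metric.ball (0 : ℂ) ρ,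
      Complex.exp (-g z) * f z = Complex.exp (-g 0) * f 0 := by
    intro z hz
    refine Metric.isOpen_ball.is_const_of_deriv_eq_zero (convex_ball (0 : ℂ) ρ).isPreconnected
      (fun w hw => (hder w hw).differentiableAt.differentiableWithinAt)
      (fun w hw => (hder w hw).deriv) hz hm0
  refine ⟨fun z => g z - g 0 + Complex.log (f 0), ?_, ?_⟩
  · exact fun z hz =>
      (((hg z hz).sub_const _).add_const _).differentiableAt.differentiableWithinAt
  · intro z hz
    have h2 : f z = Complex.exp (g z - g 0 + Complex.log (f 0)) := by
      rw [Complex.exp_add, Complex.exp_log (hne 0 hm0), sub_eq_add_neg, Complex.exp_add, mul_assoc,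
        ← hconst z hz, ← mul_assoc, ← Complex.exp_add]
      simp
    conv_rhs => rw [h2]
    rw [Complex.norm_exp, Real.log_exp]

/-- Harnack for even functions, strictly positive case. -/
lemma even_harnack_pos {ρ : ℝ} (K : ℂ → ℂ)
    (hd : DifferentiableOn ℂ K (Metric.ball 0 ρ)) (heven : ∀ z, K (-z) = K z)
    (hpos : ∀ z ∈ Metric.ball (0 : ℂ) ρ, 0 < (K z).re) (z : ℂ) (hz : z ∈ Metric.ball (0 : ℂ) ρ) :
    (1 - (‖z‖ / ρ) ^ 2) * (K 0).re ≤ (1 + (‖z‖ / ρ) ^ 2) * (K z).re := by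
  have hρ : 0 < ρ := Metric.nonempty_ball.1 ⟨z, hz⟩
  have hm0 : (0 : ℂ) ∈ Metric.ball (0 : ℂ) ρ := Metric.mem_ball_self hρ
  have hx := hpos 0 hm0
  set w : ℂ → ℂ := fun z => (K z - K 0) / (K z + starRingEnd ℂ (K 0)) with hw
  have hden : ∀ u ∈ Metric.ball (0 : ℂ) ρ, K u + starRingEnd ℂ (K 0) ≠ 0 := by
    intro u hu h
    have := congrArg Complex.re h
    simp at this
    linarith [hpos u hu]
  have hwd : DifferentiableOn ℂ w (Metric.ball 0 ρ) :=
    (hd.sub_const _).div (hd.add_const _) hden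
  have hw0 : w 0 = 0 := by simp [hw]
  have hmaps : Set.MapsTo w (Metric.ball 0 ρ) (Metric.closedBall (w 0) 1) := by
    intro u hu
    rw [hw0, mem_closedBall_zero_iff, hw]
    simp only [norm_div]
    refine div_le_one_of_le₀ ?_ (norm_nonneg _)
    rw [← sq_le_sq₀ (norm_nonneg _) (norm_nonneg _), Complex.sq_norm, Complex.sq_norm,
      Complex.normSq_apply, Complex.normSq_apply]
    simp
    nlinarith [hpos u hu, mul_pos (hpos u hu) hx]
  have hwe : ∀ u, w (-u) = w u := by intro u; simp [hw, heven]
  have hw0d : HasDerivAt w 0 0 := by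
    have h1 : HasDerivAt w (deriv w 0) 0 :=
      (hwd.differentiableAt (Metric.isOpen_ball.mem_nhds hm0)).hasDerivAt
    have h2 : deriv w 0 = 0 := by
      have h3 : deriv (fun u => w (-u)) 0 = - deriv w (-0) := deriv_comp_neg w 0
      have h4 : (fun u => w (-u)) = w := funext hwe
      rw [h4, neg_zero] at h3
      exact self_eq_neg.mp h3
    rwa [h2] at h1
  have hlo : (w · - w 0) =o[nhds 0] (fun u : ℂ => ‖u - 0‖ ^ 1) := by
    have := hw0d.isLittleO
    simp only [smul_zero, sub_zero] at this
    simpa using this.norm_right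
  have hs := Complex.dist_le_mul_div_pow_of_mapsTo_ball_of_isLittleO hwd hmaps hlo hz
  rw [hw0, dist_zero_right, dist_zero_right, one_mul] at hs
  have ht : ‖z‖ / ρ < 1 := by
    rw [div_lt_one hρ]; simpa using hz
  norm_num at hs
  set t := (‖z‖ / ρ) ^ 2 with htt
  have ht0 : 0 ≤ t := sq_nonneg _
  have ht1 : t < 1 := by
    have : 0 ≤ ‖z‖ / ρ := by positivity
    nlinarith
  simp only [hw, norm_div] at hs
  rw [div_le_iff₀ (norm_pos_iff.2 (hden z hz))] at hs
  have hs2 := pow_le_pow_left₀ (norm_nonneg _) hs 2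
  rw [mul_pow, Complex.sq_norm, Complex.sq_norm,
      Complex.normSq_apply, Complex.normSq_apply] at hs2
  simp at hs2
  have hz' := hpos z hz
  have ht2 : t ^ 2 ≤ 1 := by nlinarith
  have h5 : ((K 0).re - (K z).re) ^ 2 ≤ (t * ((K z).re + (K 0).re)) ^ 2 := by
    nlinarith [mul_nonneg (sub_nonneg.2 ht2) (sq_nonneg ((K z).im - (K 0).im))]
  have h6 := abs_le_of_sq_le_sq' h5 (by positivity)
  nlinarith [h6.2]

lemma even_harnack {ρ : ℝ} (K : ℂ → ℂ)
    (hd : DifferentiableOn ℂ K (Metric.ball 0 ρ)) (heven : ∀ z, K (-z) = K z)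
    (hpos : ∀ z ∈ Metric.ball (0 : ℂ) ρ, 0 ≤ (K z).re) (z : ℂ) (hz : z ∈ Metric.ball (0 : ℂ) ρ) :
    (1 - (‖z‖ / ρ) ^ 2) * (K 0).re ≤ (1 + (‖z‖ / ρ) ^ 2) * (K z).re := by
  refine le_of_forall_pos_le_add fun ε hε => ?_
  set t := (‖z‖ / ρ) ^ 2 with htt
  have ht0 : 0 ≤ t := sq_nonneg _
  have hδ : 0 < ε / (1 + t) := by positivity
  have h := even_harnack_pos (ρ := ρ) (fun u => K u + ((ε / (1 + t) : ℝ) : ℂ)) (hd.add_const _)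
    (by intro u; simp [heven])
    (by intro u hu; have := hpos u hu; rw [Complex.add_re, Complex.ofReal_re]; linarith) z hz
  simp only [Complex.add_re, Complex.ofReal_re] at h
  rw [← htt] at h
  have h1 : (1 + t) * (ε / (1 + t)) = ε := by field_simp
  have ht1 : t < 1 := by
    have hρ : 0 < ρ := Metric.nonempty_ball.1 ⟨z, hz⟩
    have : 0 ≤ ‖z‖ / ρ := by positivity
    have : ‖z‖ / ρ < 1 := by
      rw [div_lt_one hρ]; simpa using hz
    nlinarith
  nlinarith [mul_nonneg (sub_nonneg.2 ht1.le) hδ.le]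

lemma gibbs {n : ℕ} (p a : Fin n → ℝ) (hp : ∀ j, 0 < p j) (hs : ∑ j, p j = 1)
    (ha : ∀ j, 0 < a j) :
    ∑ j, p j * Real.log (a j) - ∑ j, p j * Real.log (p j) ≤ Real.log (∑ j, a j) := by
  have h := strictConcaveOn_log_Ioi.concaveOn.le_map_sum (t := Finset.univ) (w := p)
    (p := fun j => a j / p j) (fun j _ => (hp j).le) hs
    (fun j _ => div_pos (ha j) (hp j))
  simp only [smul_eq_mul] at h
  have e1 : ∑ j, p j * (a j / p j) = ∑ j, a j :=
    Finset.sum_congr rfl fun j _ => by have := (hp j).ne'; field_simp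
  rw [e1] at h
  rw [← Finset.sum_sub_distrib]
  refine le_trans (le_of_eq (Finset.sum_congr rfl fun j _ => ?_)) h
  rw [Real.log_div (ha j).ne' (hp j).ne']
  ring

/-- **Key analytic estimate for the dimension of quasicircles.** Let `0 < ρ < 1`,
`0 ≤ k < ρ`, `C ≥ 1`, and let `r₁,…,rₙ` be holomorphic nonvanishing functions on the
disc `ρ𝔻` satisfying the symmetry `rⱼ(x) = conj (rⱼ(−x))` for real `x`, the bound
`Σⱼ |rⱼ(λ)|² ≤ C³`, and `Σⱼ |rⱼ(0)| ≤ 1`. Then with `p = 1 + k²/ρ²` one has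
`Σⱼ |rⱼ(k)|ᵖ ≤ C^(3k²/ρ²)`. -/
theorem key_estimate (ρ k C : ℝ) (hρ0 : 0 < ρ) (hρ1 : ρ < 1)
    (hk0 : 0 ≤ k) (hkρ : k < ρ) (hC : 1 ≤ C)
    (n : ℕ) (hn : 1 ≤ n) (r : Fin n → ℂ → ℂ)
    (hdiff : ∀ j, ∀ z ∈ Metric.ball (0 : ℂ) ρ, DifferentiableAt ℂ (r j) z)
    (hne : ∀ j, ∀ z ∈ Metric.ball (0 : ℂ) ρ, r j z ≠ 0)
    (hsymm : ∀ j, ∀ x : ℝ, |x| < ρ → r j (x : ℂ) = starRingEnd ℂ (r j (-x : ℂ)))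
    (hbound : ∀ lam ∈ Metric.ball (0 : ℂ) ρ, ∑ j, ‖r j lam‖ ^ 2 ≤ C ^ 3)
    (h0 : ∑ j, ‖r j 0‖ ≤ 1) :
    ∑ j, ‖r j (k : ℂ)‖ ^ (1 + k ^ 2 / ρ ^ 2) ≤
      C ^ (3 * k ^ 2 / ρ ^ 2) := by
  set t := k ^ 2 / ρ ^ 2 with ht
  have ht0 : 0 ≤ t := by positivity
  have ht1 : t ≤ 1 := by
    rw [ht]
    exact div_le_one_of_le₀ (pow_le_pow_left₀ hk0 hkρ.le 2) (by positivity)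
  have hm0 : (0 : ℂ) ∈ Metric.ball (0 : ℂ) ρ := Metric.mem_ball_self hρ0
  have hmk : (k : ℂ) ∈ Metric.ball (0 : ℂ) ρ := by simpa [abs_of_nonneg hk0] using hkρ
  have hmneg : ∀ z ∈ Metric.ball (0 : ℂ) ρ, -z ∈ Metric.ball (0 : ℂ) ρ := by
    intro z hz; simpa using hz
  have hnn : (Finset.univ : Finset (Fin n)).Nonempty := ⟨⟨0, hn⟩, Finset.mem_univ _⟩
  have hrp : ∀ z ∈ Metric.ball (0 : ℂ) ρ, ∀ j, 0 < ‖r j z‖ :=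
    fun z hz j => norm_pos_iff.2 (hne j z hz)
  choose L hLd hL using fun j => exists_holo_log hρ0 (r j)
    (fun z hz => (hdiff j z hz).differentiableWithinAt) (hne j)
  set S := ∑ j, ‖r j (k : ℂ)‖ ^ (1 + t) with hS
  have hSpos : 0 < S := Finset.sum_pos (fun j _ => Real.rpow_pos_of_pos (hrp _ hmk j) _) hnn
  set p : Fin n → ℝ := fun j => ‖r j (k : ℂ)‖ ^ (1 + t) / S with hp
  have hpp : ∀ j, 0 < p j := fun j => div_pos (Real.rpow_pos_of_pos (hrp _ hmk j) _) hSpos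
  have hps : ∑ j, p j = 1 := by
    simp only [hp]
    rw [← Finset.sum_div, ← hS, div_self hSpos.ne']
  set E := ∑ j, p j * Real.log (p j) with hE
  set M := 3 * Real.log C with hM
  set Λ : ℂ → ℝ := fun z => ∑ j, p j * Real.log ‖r j z‖ with hΛ
  have hEk : E = (1 + t) * Λ k - Real.log S := by
    have : ∀ j, p j * Real.log (p j)
        = (1 + t) * (p j * Real.log ‖r j (k : ℂ)‖) - p j * Real.log S := by
      intro j
      have : Real.log (p j) = (1 + t) * Real.log ‖r j (k : ℂ)‖ - Real.log S := by
        simp only [hp]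
        rw [Real.log_div (Real.rpow_pos_of_pos (hrp _ hmk j) _).ne' hSpos.ne',
          Real.log_rpow (hrp _ hmk j)]
      rw [this]; ring
    rw [hE, Finset.sum_congr rfl fun j _ => this j, Finset.sum_sub_distrib, ← Finset.mul_sum,
      ← Finset.sum_mul, hps, one_mul]
  have hΛ0 : Λ 0 ≤ E := by
    have h1 := gibbs p (fun j => ‖r j 0‖) hpp hps (hrp 0 hm0)
    have h2 : Real.log (∑ j, ‖r j 0‖) ≤ 0 :=
      Real.log_nonpos (Finset.sum_nonneg fun j _ => norm_nonneg _) h0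
    simp only [hΛ, hE]
    linarith
  have hH : ∀ z ∈ Metric.ball (0 : ℂ) ρ, 0 ≤ E - 2 * Λ z + M := by
    intro z hz
    have h1 := gibbs p (fun j => ‖r j z‖ ^ 2) hpp hps (fun j => pow_pos (hrp z hz j) 2)
    have h2 : Real.log (∑ j, ‖r j z‖ ^ 2) ≤ M := by
      have := Real.log_le_log (Finset.sum_pos (fun j _ => pow_pos (hrp z hz j) 2) hnn)
        (hbound z hz)
      rw [Real.log_pow] at this
      simpa [hM] using this
    have h3 : ∑ j, p j * Real.log (‖r j z‖ ^ 2) = 2 * Λ z := by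
      simp only [hΛ, Finset.mul_sum, Real.log_pow]
      exact Finset.sum_congr rfl fun j _ => by push_cast; ring
    rw [h3] at h1
    linarith
  have hsum : ∀ z ∈ Metric.ball (0 : ℂ) ρ, (∑ j, (p j : ℂ) * L j z).re = Λ z := by
    intro z hz
    simp only [hΛ, Complex.re_sum, Complex.re_ofReal_mul]
    exact Finset.sum_congr rfl fun j _ => by rw [hL j z hz]
  have hFd : DifferentiableOn ℂ (fun z => ∑ j, (p j : ℂ) * L j z) (Metric.ball 0 ρ) :=
    DifferentiableOn.fun_sum fun j _ => (hLd j).const_mul _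
  have hFd' : DifferentiableOn ℂ (fun z => ∑ j, (p j : ℂ) * L j (-z)) (Metric.ball 0 ρ) :=
    hFd.comp differentiableOn_id.neg hmneg
  set K : ℂ → ℂ := fun z =>
    ((E + M : ℝ) : ℂ) - (∑ j, (p j : ℂ) * L j z + ∑ j, (p j : ℂ) * L j (-z)) with hK
  have hKre : ∀ z ∈ Metric.ball (0 : ℂ) ρ, (K z).re = E + M - (Λ z + Λ (-z)) := by
    intro z hz
    simp only [hK, Complex.sub_re, Complex.add_re, Complex.ofReal_re]
    rw [hsum z hz, hsum (-z) (hmneg z hz)]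
  have hsym : Λ (-(k : ℂ)) = Λ k := by
    simp only [hΛ]
    refine Finset.sum_congr rfl fun j _ => ?_
    rw [hsymm j k (by rwa [abs_of_nonneg hk0]), Complex.norm_conj]
  have hHar := even_harnack (ρ := ρ) K ((hFd.add hFd').const_sub _)
    (by intro z; simp only [hK, neg_neg]; rw [add_comm (∑ j, (p j : ℂ) * L j (-z))])
    (by intro z hz; rw [hKre z hz]; linarith [hH z hz, hH (-z) (hmneg z hz)]) k hmk
  rw [hKre _ hm0, hKre _ hmk, hsym, neg_zero, Complex.norm_real, Real.norm_eq_abs,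
    abs_of_nonneg hk0, div_pow, ← ht] at hHar
  have hfin : Real.log S ≤ t * M := by
    have : (1 - t) * (M - E) ≤ (1 - t) * (E + M - (Λ 0 + Λ 0)) :=
      mul_le_mul_of_nonneg_left (by linarith) (by linarith)
    nlinarith
  have hC0 : 0 < C := by linarith
  rw [Real.log_le_iff_le_exp hSpos] at hfin
  refine hfin.trans (le_of_eq ?_)
  rw [Real.rpow_def_of_pos hC0, hM, ht]
  congr 1
  ring
end

section
/- Let 0 < ρ < 1, 0 ≤ k < ρ, C > 0, n ≥ 1, and let ν₁,…,νₙ be strictly positive reals with Σⱼ νⱼ = 1. Let r₁,…,rₙ be holomorphic nonvanishing functions on ρD = {λ ∈ ℂ : |λ| < ρ} satisfying |rⱼ(x)| = |rⱼ(−x)| for every real x with |x| < ρ, Σⱼ |rⱼ(λ)|² ≤ C³ for every λ ∈ ρD, and Σⱼ |rⱼ(0)| ≤ 1. Then, with Iᵥ := −Σⱼ νⱼ log νⱼ and Λᵥ(λ) := −Σⱼ νⱼ log|rⱼ(λ)|, one has Iᵥ − (1 + k²/ρ²)·Λᵥ(k) ≤ 3·(k²/ρ²)·log C. -/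
open Finset

open InnerProductSpace in
/-- Symmetric Harnack inequality on a closed disc. -/
lemma symm_harnack (f : ℂ → ℝ) (R k : ℝ) (hk0 : 0 ≤ k) (hkR : k < R)
    (hf : HarmonicOnNhd f (Metric.closedBall 0 R))
    (hpos : ∀ z ∈ Metric.sphere (0 : ℂ) R, 0 ≤ f z) :
    2 * ((R ^ 2 - k ^ 2) / (R ^ 2 + k ^ 2)) * f 0 ≤ f k + f (-k) := by
  have hR : 0 < R := lt_of_le_of_lt hk0 hkR
  have hw1 : (k : ℂ) ∈ Metric.ball (0 : ℂ) R := by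
    simp [abs_of_nonneg hk0, hkR]
  have hw2 : (-k : ℂ) ∈ Metric.ball (0 : ℂ) R := by
    simp [abs_of_nonneg hk0, hkR]
  have hfc : ContinuousOn f (Metric.sphere 0 |R|) := by
    rw [abs_of_pos hR]
    exact hf.continuousOn.mono Metric.sphere_subset_closedBall
  have hP : ∀ w ∈ Metric.ball (0 : ℂ) R,
      CircleIntegrable (poissonKernel 0 w • f) 0 R := by
    intro w hw
    apply ContinuousOn.circleIntegrable'
    apply ContinuousOn.smul _ hfc
    rw [poissonKernel_eq_re_herglotzRieszKernel]
    exact Complex.continuous_re.comp_continuousOn (continuousOn_herglotzRieszKernel_sphere hw)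
  rw [← hf.circleAverage_poissonKernel_smul hw1, ← hf.circleAverage_poissonKernel_smul hw2,
    ← Real.circleAverage_add (hP _ hw1) (hP _ hw2)]
  have h0 : Real.circleAverage f 0 R = f 0 := by
    apply InnerProductSpace.HarmonicOnNhd.circleAverage_eq
    rwa [abs_of_pos hR]
  rw [← h0, ← smul_eq_mul, ← Real.circleAverage_smul]
  apply Real.circleAverage_mono
  · exact (hfc.circleIntegrable').const_smul
  · exact (hP _ hw1).add (hP _ hw2)
  · intro z hz
    rw [abs_of_pos hR] at hz
    have hfz := hpos z hz
    have hzR : ‖z‖ = R := by simpa using hz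
    have hk : ‖(k : ℂ)‖ = k := by simp [abs_of_nonneg hk0]
    simp only [Pi.smul_apply, Pi.add_apply, Pi.mul_apply, smul_eq_mul, poissonKernel_def,
      sub_zero, norm_neg, hzR, hk, sub_neg_eq_add]
    rw [← add_mul]
    apply mul_le_mul_of_nonneg_right _ hfz
    have ha : 0 < ‖z - k‖ ^ 2 := by
      have := norm_sub_norm_le z (k : ℂ)
      rw [hzR, hk] at this
      have : 0 < ‖z - k‖ := by linarith
      positivity
    have hb : 0 < ‖z + k‖ ^ 2 := by
      have := norm_sub_norm_le z (-k : ℂ)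
      rw [norm_neg, hzR, hk, sub_neg_eq_add] at this
      have : 0 < ‖z + k‖ := by linarith
      positivity
    have hab : ‖z + k‖ ^ 2 + ‖z - k‖ ^ 2 = 2 * (R ^ 2 + k ^ 2) := by
      have := parallelogram_law_with_norm ℝ z (k : ℂ)
      rw [hzR, hk] at this
      nlinarith
    generalize ‖z + k‖ ^ 2 = b at *
    generalize ‖z - k‖ ^ 2 = a at *
    have hS : R ^ 2 + k ^ 2 = (a + b) / 2 := by linarith
    have hD : 0 < R ^ 2 - k ^ 2 := by nlinarith
    rw [hS]
    generalize R ^ 2 - k ^ 2 = D at *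
    have : D / a + D / b - 2 * (D / ((a + b) / 2)) = D * (a - b) ^ 2 / (a * b * (a + b)) := by
      field_simp
      ring
    have : 0 ≤ D * (a - b) ^ 2 / (a * b * (a + b)) := by positivity
    linarith

/-- Gibbs' inequality. -/
lemma gibbs_aux {n : ℕ} (ν p : Fin n → ℝ) (hν : ∀ j, 0 < ν j) (hsum : ∑ j, ν j = 1)
    (hp : ∀ j, 0 < p j) (S : ℝ) (hS : 0 < S) (hpS : ∑ j, p j ≤ S) :
    (∑ j, ν j * Real.log (p j)) - ∑ j, ν j * Real.log (ν j) ≤ Real.log S := by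
  have h : ∀ j, ν j * Real.log (p j) - ν j * Real.log (ν j) - ν j * Real.log S
      ≤ p j / S - ν j := by
    intro j
    have h1 := Real.log_le_sub_one_of_pos (x := p j / (ν j * S))
      (div_pos (hp j) (mul_pos (hν j) hS))
    rw [Real.log_div (hp j).ne' (mul_pos (hν j) hS).ne', Real.log_mul (hν j).ne' hS.ne'] at h1
    have h2 := mul_le_mul_of_nonneg_left h1 (hν j).le
    have h3 : ν j * (p j / (ν j * S) - 1) = p j / S - ν j := by
      have := (hν j).ne'
      field_simp
    rw [h3] at h2
    linarith
  have h2 := Finset.sum_le_sum (fun j (_ : j ∈ Finset.univ) => h j)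
  simp only [Finset.sum_sub_distrib, ← Finset.sum_mul, ← Finset.sum_div, hsum] at h2
  have : (∑ j, p j) / S ≤ 1 := (div_le_one hS).2 hpS
  linarith

/-- **Per-measure estimate in the dimension bound.** For holomorphic nonvanishing
functions `r₁,…,rₙ` on `ρ𝔻` with `|rⱼ(x)| = |rⱼ(−x)|` for real `x`,
`Σⱼ |rⱼ(λ)|² ≤ C³`, `Σⱼ |rⱼ(0)| ≤ 1`, and any strictly positive probability vector
`ν`, the entropy `Iᵥ = −Σⱼ νⱼ log νⱼ` and Lyapunov exponent
`Λᵥ(λ) = −Σⱼ νⱼ log |rⱼ(λ)|` satisfy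
`Iᵥ − (1 + k²/ρ²) Λᵥ(k) ≤ 3 (k²/ρ²) log C`. -/
theorem per_measure_estimate (ρ k C : ℝ) (hρ0 : 0 < ρ) (hρ1 : ρ < 1)
    (hk0 : 0 ≤ k) (hkρ : k < ρ) (hC : 0 < C)
    (n : ℕ) (hn : 1 ≤ n)
    (ν : Fin n → ℝ) (hν : ∀ j, 0 < ν j) (hsum : ∑ j, ν j = 1)
    (r : Fin n → ℂ → ℂ)
    (hdiff : ∀ j, ∀ z ∈ Metric.ball (0 : ℂ) ρ, DifferentiableAt ℂ (r j) z)
    (hne : ∀ j, ∀ z ∈ Metric.ball (0 : ℂ) ρ, r j z ≠ 0)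
    (hsymm : ∀ j, ∀ x : ℝ, |x| < ρ →
      ‖r j (x : ℂ)‖ = ‖r j (-x : ℂ)‖)
    (hbound : ∀ lam ∈ Metric.ball (0 : ℂ) ρ, ∑ j, ‖r j lam‖ ^ 2 ≤ C ^ 3)
    (h0 : ∑ j, ‖r j 0‖ ≤ 1) :
    (-∑ j, ν j * Real.log (ν j)) -
        (1 + k ^ 2 / ρ ^ 2) * (-∑ j, ν j * Real.log (‖r j (k : ℂ)‖)) ≤
      3 * (k ^ 2 / ρ ^ 2) * Real.log C := by
  set I : ℝ := -∑ j, ν j * Real.log (ν j) with hI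
  set L : ℝ := Real.log C with hL
  have hharm : ∀ j, ∀ z ∈ Metric.ball (0 : ℂ) ρ,
      InnerProductSpace.HarmonicAt (fun w => Real.log ‖r j w‖) z := by
    intro j z hz
    apply AnalyticAt.harmonicAt_log_norm _ (hne j z hz)
    have hd : DifferentiableOn ℂ (r j) (Metric.ball 0 ρ) :=
      fun w hw => (hdiff j w hw).differentiableWithinAt
    exact hd.analyticAt (Metric.isOpen_ball.mem_nhds hz)
  have hharmS : ∀ z ∈ Metric.ball (0 : ℂ) ρ, ∀ s : Finset (Fin n),
      InnerProductSpace.HarmonicAt (fun w => ∑ j ∈ s, ν j * Real.log ‖r j w‖) z := by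
    intro z hz s
    induction s using Finset.induction_on with
    | empty => simpa using InnerProductSpace.harmonicAt_const (0 : ℝ)
    | insert a s ha ih =>
      simp only [Finset.sum_insert ha]
      exact ((hharm a z hz).const_smul (c := ν a)).add ih
  set H : ℂ → ℝ := fun w => (3 * L - I) - (2 : ℝ) • ∑ j, ν j * Real.log ‖r j w‖ with hH
  have hHharm : ∀ z ∈ Metric.ball (0 : ℂ) ρ, InnerProductSpace.HarmonicAt H z := by
    intro z hz
    exact (InnerProductSpace.harmonicAt_const (3 * L - I)).sub
      ((hharmS z hz Finset.univ).const_smul (c := (2 : ℝ)))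
  have hHpos : ∀ z ∈ Metric.ball (0 : ℂ) ρ, 0 ≤ H z := by
    intro z hz
    have hp : ∀ j, 0 < ‖r j z‖ := fun j => norm_pos_iff.2 (hne j z hz)
    have := gibbs_aux ν (fun j => ‖r j z‖ ^ 2) hν hsum (fun j => pow_pos (hp j) 2)
      (C ^ 3) (pow_pos hC 3) (hbound z hz)
    simp only [Real.log_pow] at this
    have h2 : ∑ j, ν j * (((2 : ℕ) : ℝ) * Real.log ‖r j z‖)
        = 2 * ∑ j, ν j * Real.log ‖r j z‖ := by
      rw [Finset.mul_sum]
      refine Finset.sum_congr rfl fun j _ => ?_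
      push_cast
      ring
    rw [h2] at this
    push_cast at this
    simp only [hH, smul_eq_mul]
    linarith
  have hH0 : I + 3 * L ≤ H 0 := by
    have hz : (0 : ℂ) ∈ Metric.ball (0 : ℂ) ρ := Metric.mem_ball_self hρ0
    have := gibbs_aux ν (fun j => ‖r j 0‖) hν hsum (fun j => norm_pos_iff.2 (hne j 0 hz))
      1 one_pos h0
    rw [Real.log_one] at this
    simp only [hH, smul_eq_mul]
    linarith
  have hHsymm : H (-k) = H k := by
    simp only [hH, hsymm _ k (by rwa [abs_of_nonneg hk0])]
  have key : ∀ R ∈ Set.Ioo k ρ, (R ^ 2 - k ^ 2) * H 0 ≤ (R ^ 2 + k ^ 2) * H k := by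
    intro R hR
    have hsub : Metric.closedBall (0 : ℂ) R ⊆ Metric.ball 0 ρ :=
      Metric.closedBall_subset_ball hR.2
    have := symm_harnack H R k hk0 hR.1 (fun z hz => hHharm z (hsub hz))
      (fun z hz => hHpos z (hsub (Metric.sphere_subset_closedBall hz)))
    rw [hHsymm] at this
    have hS : 0 < R ^ 2 + k ^ 2 := by
      have := hR.1
      have : 0 < R := by linarith
      positivity
    have h3 : (R ^ 2 - k ^ 2) / (R ^ 2 + k ^ 2) * H 0 ≤ H k := by linarith
    rw [div_mul_eq_mul_div, div_le_iff₀ hS] at h3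
    linarith
  have keyρ : (ρ ^ 2 - k ^ 2) * H 0 ≤ (ρ ^ 2 + k ^ 2) * H k := by
    apply le_on_closure (s := Set.Ioo k ρ) (f := fun R : ℝ => (R ^ 2 - k ^ 2) * H 0)
      (g := fun R : ℝ => (R ^ 2 + k ^ 2) * H k) key (by fun_prop) (by fun_prop)
    rw [closure_Ioo hkρ.ne]
    exact ⟨hkρ.le, le_rfl⟩
  have hD : 0 < ρ ^ 2 - k ^ 2 := by nlinarith
  have h5 := mul_le_mul_of_nonneg_left hH0 hD.le
  have h6 : H k = (3 * L - I) - 2 * ∑ j, ν j * Real.log ‖r j k‖ := rfl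
  rw [h6] at keyρ
  generalize ∑ j, ν j * Real.log ‖r j k‖ = M at *
  have hρ2 : 0 < ρ ^ 2 := by positivity
  have h7 : ρ ^ 2 * I - (ρ ^ 2 + k ^ 2) * (-M) ≤ 3 * k ^ 2 * L := by nlinarith
  have h8 : 3 * (k ^ 2 / ρ ^ 2) * L - (I - (1 + k ^ 2 / ρ ^ 2) * (-M))
      = (3 * k ^ 2 * L - (ρ ^ 2 * I - (ρ ^ 2 + k ^ 2) * (-M))) / ρ ^ 2 := by
    field_simp
  have h9 : 0 ≤ (3 * k ^ 2 * L - (ρ ^ 2 * I - (ρ ^ 2 + k ^ 2) * (-M))) / ρ ^ 2 :=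
    div_nonneg (by linarith) hρ2.le
  linarith
end
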